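/- For every Cayley tree T labelled with [n]_0, the degree of the root of T equals the number of 1's in its preference sequence, and the children sequence of T equals the multiplicity sequence of its preference sequence: deg_∘(T) = ones(π_T) and chseq(T) = mult(π_T). -/

import Mathlib

/-!
The preference sequence is `π_T = σ ∘ f_T` with `σ v = ω_T⁻¹(v) + 1`. If `σ` is a bijection
from the vertices `{0,…,n}` onto the values `{1,…,n+1}`, then the fibre of `π_T` over `σ v` is
the set of children of `v` (`multIn_pref`), so counting vertices with `j` children is the same
as counting values of multiplicity `j`; since `σ 0 = 1`, the root's children correspond to the
ones of `π_T`.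

That `σ` is a bijection amounts to the priority-first search visiting every vertex exactly
once. As long as a vertex is unvisited, the last unvisited vertex on its path to the root is a
candidate for the next visit (`exists_candidate`), so the infimum in `wearyList` is attained
by a new vertex and the list has no repetition (`wearyList_spec`). After `n` steps it has
`n + 1` distinct entries in `{0,…,n}`, hence exhausts the vertices (`mem_wearyList`).
-/

open scoped Classical

namespace WearyParking

/-- `f` is the parent function of a Cayley tree on `{0,…,n}` rooted at `0`:
`f 0 = 0`, `f` is pinned to `0` outside `{1,…,n}`, `f` maps `{1,…,n}` into `{0,…,n}`,
and every vertex reaches the root under iteration. -/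
def IsCayleyTree (n : ℕ) (f : ℕ → ℕ) : Prop :=
  f 0 = 0 ∧ (∀ i, n < i → f i = 0) ∧
  (∀ i, 1 ≤ i → i ≤ n → f i ≤ n) ∧
  (∀ i, 1 ≤ i → i ≤ n → ∃ k, f^[k] i = 0)

/-- A non-root vertex `i` is a record of the tree if it is greater than
all of its ancestors. -/
def IsRecord (n : ℕ) (f : ℕ → ℕ) (i : ℕ) : Prop :=
  1 ≤ i ∧ i ≤ n ∧ ∀ k, 1 ≤ k → f^[k] i < i

/-- The smallest record larger than `i`. -/
noncomputable def nextRecord (n : ℕ) (f : ℕ → ℕ) (i : ℕ) : ℕ :=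
  sInf {j | IsRecord n f j ∧ i < j}

/-- The record (blob) code of the tree, a function on `{1,…,n-1}`:
at a non-record position it records the parent, and at a record position it
records the parent of the next record. -/
noncomputable def blob (n : ℕ) (f : ℕ → ℕ) (i : ℕ) : ℕ :=
  if IsRecord n f i then f (nextRecord n f i) else f i

/-- Number of children of vertex `v` in the tree. -/
def numChildren (n : ℕ) (f : ℕ → ℕ) (v : ℕ) : ℕ :=
  ((Finset.Icc 1 n).filter fun i => f i = v).card

/-- The list of the first `i+1` vertices visited by the priority-first search:
start at the root `0`; at each step visit the smallest unvisited vertex whose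
parent has been visited. -/
noncomputable def wearyList (n : ℕ) (f : ℕ → ℕ) : ℕ → List ℕ
  | 0 => [0]
  | (i + 1) =>
      wearyList n f i ++
        [sInf {v | 1 ≤ v ∧ v ≤ n ∧ v ∉ wearyList n f i ∧ f v ∈ wearyList n f i}]

/-- The weary permutation of the tree: `weary n f i` is the `i`-th vertex visited
by the priority-first search (with `weary n f 0 = 0`). -/
noncomputable def weary (n : ℕ) (f : ℕ → ℕ) (i : ℕ) : ℕ :=
  (wearyList n f n).getD i 0

/-- The inverse of the weary permutation. -/
noncomputable def wearyInv (n : ℕ) (f : ℕ → ℕ) (v : ℕ) : ℕ :=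
  sInf {i | weary n f i = v}

/-- The preference sequence `π_T` of the tree: `π_T i = ω_T⁻¹ (f_T i) + 1`. -/
noncomputable def pref (n : ℕ) (f : ℕ → ℕ) (i : ℕ) : ℕ :=
  wearyInv n f (f i) + 1

/-- Parent function of the priority tree `pt(T)`: `ω_T⁻¹ ∘ f_T ∘ ω_T`. -/
noncomputable def prioParent (n : ℕ) (f : ℕ → ℕ) (i : ℕ) : ℕ :=
  wearyInv n f (f (weary n f i))

/-- The list of spots occupied by cars `1,…,c` in the classical parking process:
car `c` parks at the first spot `≥ π c` not occupied by an earlier car. -/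
noncomputable def spotList (π : ℕ → ℕ) : ℕ → List ℕ
  | 0 => []
  | (c + 1) => spotList π c ++ [sInf {s | π (c + 1) ≤ s ∧ s ∉ spotList π c}]

/-- The spot where car `c` ends up in the classical parking process. -/
noncomputable def spot (π : ℕ → ℕ) (c : ℕ) : ℕ :=
  (spotList π c).getD (c - 1) 0

/-- `π` is a parking function of length `n`: preferences lie in `{1,…,n}`
(pinned to `1` outside `{1,…,n}`) and every car parks within the `n` spots. -/
def IsParkingFun (n : ℕ) (π : ℕ → ℕ) : Prop :=
  (∀ c, 1 ≤ c → c ≤ n → 1 ≤ π c ∧ π c ≤ n) ∧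
  (∀ c, c = 0 ∨ n < c → π c = 1) ∧
  (∀ c, 1 ≤ c → c ≤ n → spot π c ≤ n)

/-- The bird's-eye permutation `ω_π`: the car parked at spot `i` (and `0` at `0`). -/
noncomputable def birdsEye (n : ℕ) (π : ℕ → ℕ) (i : ℕ) : ℕ :=
  if i = 0 then 0 else sInf {c | 1 ≤ c ∧ c ≤ n ∧ spot π c = i}

/-- The inverse of the bird's-eye permutation. -/
noncomputable def birdsEyeInv (n : ℕ) (π : ℕ → ℕ) (c : ℕ) : ℕ :=
  sInf {i | birdsEye n π i = c}

/-- Parent function of the parking tree `PT(π)`: `f_π i = ω_π (π i - 1)`. -/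
noncomputable def ptParent (n : ℕ) (π : ℕ → ℕ) (i : ℕ) : ℕ :=
  if 1 ≤ i ∧ i ≤ n then birdsEye n π (π i - 1) else 0

/-- `v` is a record of the parking function `π`, i.e. a left-to-right maximum of
the word `ω_π(1) ω_π(2) ⋯ ω_π(n)`. -/
def IsPfRecord (n : ℕ) (π : ℕ → ℕ) (v : ℕ) : Prop :=
  ∃ i, 1 ≤ i ∧ i ≤ n ∧ birdsEye n π i = v ∧ ∀ j, 1 ≤ j → j < i → birdsEye n π j < v

/-- The waiting time of the tree: `wait T = Σ_{i=1}^n (i - f_{pt(T)}(i))`. -/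
noncomputable def wait (n : ℕ) (f : ℕ → ℕ) : ℕ :=
  ∑ i ∈ Finset.Icc 1 n, (i - prioParent n f i)

/-- The number of priority small ascents of the tree. -/
noncomputable def psa (n : ℕ) (f : ℕ → ℕ) : ℕ :=
  ((Finset.Icc 1 n).filter fun i => prioParent n f i = i - 1).card

/-- The number of children of the root. -/
def degRoot (n : ℕ) (f : ℕ → ℕ) : ℕ := numChildren n f 0

/-- The children sequence: `chseq n f j` is the number of vertices with exactly
`j` children. -/
def chseq (n : ℕ) (f : ℕ → ℕ) (j : ℕ) : ℕ :=
  ((Finset.Icc 0 n).filter fun v => numChildren n f v = j).card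

/-- The number of probes of the parking function: `n` plus the total displacement. -/
noncomputable def probes (n : ℕ) (π : ℕ → ℕ) : ℕ :=
  n + ∑ c ∈ Finset.Icc 1 n, (spot π c - π c)

/-- The number of lucky cars of `π`: cars parking at their preferred spot. -/
noncomputable def lucky (n : ℕ) (π : ℕ → ℕ) : ℕ :=
  ((Finset.Icc 1 n).filter fun c => spot π c = π c).card

/-- The number of `1`s in `π`. -/
def ones (n : ℕ) (π : ℕ → ℕ) : ℕ :=
  ((Finset.Icc 1 n).filter fun c => π c = 1).card

/-- The multiplicity of the value `v` in the parking function `π`. -/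
def multIn (n : ℕ) (π : ℕ → ℕ) (v : ℕ) : ℕ :=
  ((Finset.Icc 1 n).filter fun c => π c = v).card

/-- The multiplicity sequence: `multSeq n π j` is the number of values in
`{1,…,n+1}` appearing exactly `j` times in `π`. -/
def multSeq (n : ℕ) (π : ℕ → ℕ) (j : ℕ) : ℕ :=
  ((Finset.Icc 1 (n + 1)).filter fun v => multIn n π v = j).card

/-- The tree is a path graph with endpoints `0` and `n`: every vertex has at most
one child and `n` is the (unique) leaf. -/
def IsPathTree (n : ℕ) (f : ℕ → ℕ) : Prop :=
  (∀ v, v ≤ n → numChildren n f v ≤ 1) ∧ numChildren n f n = 0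

/-- `g` is the parent map of a rooted forest on `{1,…,n}` rooted at `{1,…,k}`:
the vertices `1,…,k` are roots (fixed points), every other vertex of `{1,…,n}` has a
parent in `{1,…,n}`, every vertex reaches one of the roots under iteration, and `g`
is pinned to `0` outside `{1,…,n}`. -/
def IsForestRootedAt (n k : ℕ) (g : ℕ → ℕ) : Prop :=
  (∀ i, 1 ≤ i → i ≤ k → g i = i) ∧
  (∀ i, k < i → i ≤ n → 1 ≤ g i ∧ g i ≤ n) ∧
  (∀ i, 1 ≤ i → i ≤ n → ∃ m, 1 ≤ g^[m] i ∧ g^[m] i ≤ k) ∧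
  (∀ i, i = 0 ∨ n < i → g i = 0)

theorem zero_mem_wearyList (n : ℕ) (f : ℕ → ℕ) (i : ℕ) : 0 ∈ wearyList n f i := by
  induction i with
  | zero => simp [wearyList]
  | succ i ih => simp [wearyList, ih]

theorem length_wearyList (n : ℕ) (f : ℕ → ℕ) (i : ℕ) : (wearyList n f i).length = i + 1 := by
  induction i with
  | zero => simp [wearyList]
  | succ i ih => simp [wearyList, ih]

/-- While some vertex is unvisited, the search has a candidate: the last unvisited vertex on
the path from that vertex to the root. -/
theorem exists_candidate {n : ℕ} {f : ℕ → ℕ} (hf : IsCayleyTree n f) {l : List ℕ}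
    (h0 : 0 ∈ l) {v : ℕ} (hvn : v ≤ n) (hv : v ∉ l) :
    ∃ u, 1 ≤ u ∧ u ≤ n ∧ u ∉ l ∧ f u ∈ l := by
  obtain ⟨hf0, -, hle, hreach⟩ := hf
  have hle' : ∀ k, f^[k] v ≤ n := by
    intro k
    induction k with
    | zero => simpa using hvn
    | succ k ih =>
      rw [Function.iterate_succ_apply']
      rcases Nat.eq_zero_or_pos (f^[k] v) with h | h
      · simp [h, hf0]
      · exact hle _ h ih
  have hv1 : 1 ≤ v := Nat.pos_of_ne_zero fun h => hv (h ▸ h0)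
  have hex : ∃ k, f^[k] v ∈ l := by
    obtain ⟨k, hk⟩ := hreach v hv1 hvn
    exact ⟨k, hk ▸ h0⟩
  obtain ⟨m, hm⟩ : ∃ m, Nat.find hex = m + 1 := by
    refine Nat.exists_eq_succ_of_ne_zero fun h => hv ?_
    simpa [h] using Nat.find_spec hex
  have hnot : f^[m] v ∉ l := Nat.find_min hex (by omega)
  refine ⟨f^[m] v, Nat.pos_of_ne_zero fun h => hnot (h ▸ h0), hle' m, hnot, ?_⟩
  have h := Nat.find_spec hex
  rwa [hm, Function.iterate_succ_apply'] at h

theorem wearyList_spec {n : ℕ} {f : ℕ → ℕ} (hf : IsCayleyTree n f) (i : ℕ) (hi : i ≤ n) :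
    (wearyList n f i).Nodup ∧ ∀ v ∈ wearyList n f i, v ≤ n := by
  induction i with
  | zero => simp [wearyList]
  | succ i ih =>
    obtain ⟨hnd, hb⟩ := ih (by omega)
    -- Only `i + 1 < n + 1` vertices have been visited, so an unvisited one remains.
    obtain ⟨v, hvn, hv⟩ : ∃ v, v ≤ n ∧ v ∉ wearyList n f i := by
      by_contra! hcon
      have hsub : Finset.range (n + 1) ⊆ (wearyList n f i).toFinset := fun x hx =>
        List.mem_toFinset.2 (hcon x (by simpa [Nat.lt_succ_iff] using hx))
      have := (Finset.card_le_card hsub).trans (List.toFinset_card_le _)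
      rw [Finset.card_range, length_wearyList] at this
      omega
    have hmem := Nat.sInf_mem (exists_candidate hf (zero_mem_wearyList n f i) hvn hv)
    obtain ⟨-, hn, hnot, -⟩ := hmem
    rw [wearyList]
    refine ⟨List.nodup_append.2 ⟨hnd, by simp, ?_⟩, ?_⟩
    · intro a ha b hb' hab
      rw [List.mem_singleton] at hb'
      exact hnot (hb' ▸ hab ▸ ha)
    · intro w hw
      rcases List.mem_append.1 hw with h | h
      · exact hb w h
      · rw [List.mem_singleton] at h
        exact h ▸ hn

/-- The complete search visits every vertex, by counting. -/
theorem mem_wearyList {n : ℕ} {f : ℕ → ℕ} (hf : IsCayleyTree n f) {v : ℕ} (hv : v ≤ n) :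
    v ∈ wearyList n f n := by
  obtain ⟨hnd, hb⟩ := wearyList_spec hf n le_rfl
  have heq : (wearyList n f n).toFinset = Finset.range (n + 1) := by
    apply Finset.eq_of_subset_of_card_le
    · intro x hx
      simpa [Nat.lt_succ_iff] using hb x (List.mem_toFinset.1 hx)
    · rw [List.toFinset_card_of_nodup hnd, length_wearyList, Finset.card_range]
  rw [← List.mem_toFinset, heq]
  simpa [Nat.lt_succ_iff] using hv

theorem wearyInv_spec {n : ℕ} {f : ℕ → ℕ} (hf : IsCayleyTree n f) {v : ℕ} (hv : v ≤ n) :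
    weary n f (wearyInv n f v) = v ∧ wearyInv n f v ≤ n := by
  obtain ⟨i, hi, hiv⟩ := List.mem_iff_getElem.1 (mem_wearyList hf hv)
  have hw : weary n f i = v := by
    rw [weary, List.getD_eq_getElem _ _ hi, hiv]
  rw [length_wearyList] at hi
  refine ⟨Nat.sInf_mem (s := {i | weary n f i = v}) ⟨i, hw⟩, ?_⟩
  exact (Nat.sInf_le (s := {i | weary n f i = v}) hw).trans (by omega)

theorem wearyInv_inj {n : ℕ} {f : ℕ → ℕ} (hf : IsCayleyTree n f) {v w : ℕ}
    (hv : v ≤ n) (hw : w ≤ n) (h : wearyInv n f v = wearyInv n f w) : v = w := by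
  rw [← (wearyInv_spec hf hv).1, h, (wearyInv_spec hf hw).1]

theorem wearyInv_zero (n : ℕ) (f : ℕ → ℕ) : wearyInv n f 0 = 0 := by
  have hhead : ∀ i, (wearyList n f i).getD 0 0 = 0 := by
    intro i
    induction i with
    | zero => simp [wearyList]
    | succ i ih =>
      rw [wearyList, List.getD_append _ _ _ _ (by simp [length_wearyList]), ih]
  exact Nat.le_zero.1 (Nat.sInf_le (s := {i | weary n f i = 0}) (hhead n))

/-- The children of `v` are exactly the positions where the preference sequence takes the
value `ω_T⁻¹(v) + 1`. -/
theorem multIn_pref {n : ℕ} {f : ℕ → ℕ} (hf : IsCayleyTree n f) {v : ℕ} (hv : v ≤ n) :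
    multIn n (pref n f) (wearyInv n f v + 1) = numChildren n f v := by
  unfold multIn numChildren
  congr 1
  refine Finset.filter_congr fun i hi => ?_
  rw [Finset.mem_Icc] at hi
  constructor
  · intro h
    exact wearyInv_inj hf (hf.2.2.1 i hi.1 hi.2) hv (Nat.succ_injective h)
  · rintro rfl
    rfl

/-- For every Cayley tree `T`: `deg∘(T) = ones(π_T)` and
`chseq(T) = mult(π_T)` (entrywise, for `j = 0,…,n`). -/
theorem stmt16 (n : ℕ) (f : ℕ → ℕ) (hf : IsCayleyTree n f) :
    degRoot n f = ones n (pref n f) ∧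
      ∀ j, j ≤ n → chseq n f j = multSeq n (pref n f) j := by
  constructor
  · have h := multIn_pref hf (Nat.zero_le n)
    rw [wearyInv_zero] at h
    exact h.symm
  · intro j _
    -- An injection between sets of equal size `n + 1` is onto.
    have himg : (Finset.Icc 0 n).image (fun v => wearyInv n f v + 1) = Finset.Icc 1 (n + 1) := by
      apply Finset.eq_of_subset_of_card_le
      · intro x hx
        obtain ⟨v, hv, rfl⟩ := Finset.mem_image.1 hx
        have := (wearyInv_spec hf (Finset.mem_Icc.1 hv).2).2
        exact Finset.mem_Icc.2 ⟨by omega, by omega⟩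
      · rw [Finset.card_image_of_injOn]
        · simp
        · intro v hv w hw h
          exact wearyInv_inj hf (Finset.mem_Icc.1 hv).2 (Finset.mem_Icc.1 hw).2
            (Nat.succ_injective h)
    refine Finset.card_bij (fun v _ => wearyInv n f v + 1) ?_ ?_ ?_
    · intro v hv
      obtain ⟨hv, hj⟩ := Finset.mem_filter.1 hv
      refine Finset.mem_filter.2 ⟨himg ▸ Finset.mem_image_of_mem _ hv, ?_⟩
      rw [multIn_pref hf (Finset.mem_Icc.1 hv).2, hj]
    · intro v hv w hw h
      exact wearyInv_inj hf (Finset.mem_Icc.1 (Finset.mem_filter.1 hv).1).2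
        (Finset.mem_Icc.1 (Finset.mem_filter.1 hw).1).2 (Nat.succ_injective h)
    · intro x hx
      obtain ⟨hx, hj⟩ := Finset.mem_filter.1 hx
      rw [← himg] at hx
      obtain ⟨v, hv, rfl⟩ := Finset.mem_image.1 hx
      refine ⟨v, Finset.mem_filter.2 ⟨hv, ?_⟩, rfl⟩
      rw [← multIn_pref hf (Finset.mem_Icc.1 hv).2, hj]

end WearyParking
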